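/- arXiv:2211.14364 — 5 statements merged into one kernel-verified Lean document; each statement's English description precedes it below -/
import Mathlib

section
/- Let α : ℝ → ℝ be an extended class K function, i.e., continuous, strictly increasing, with α(0) = 0. Let H : ℝ → ℝ be differentiable with H(0) ≥ 0 and H'(t) ≥ -α(H(t)) for all t ≥ 0. Then H(t) ≥ 0 for all t ≥ 0. -/
/-!
Where `f < c` the function `f` does not decrease, so it cannot cross the strictly decreasing line
`x ↦ c - ε * (1 + (x - a))`, which starts below `f a` and stays below level `c`. Letting `ε → 0`
gives `c ≤ f`. For `H' ≥ -α(H)` this applies at level `0`, because `-α` is nonnegative on the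
negative numbers.
-/

open Set Filter Topology

theorem le_image_of_deriv_right_nonneg_of_lt {f f' : ℝ → ℝ} {a b c : ℝ}
    (hf : ContinuousOn f (Icc a b))
    (hf' : ∀ x ∈ Ico a b, HasDerivWithinAt f (f' x) (Ici x) x)
    (ha : c ≤ f a) (hbelow : ∀ x ∈ Ico a b, f x < c → 0 ≤ f' x) :
    ∀ ⦃x⦄, x ∈ Icc a b → c ≤ f x := by
  intro x hx
  have line_le : ∀ ε : ℝ, 0 < ε → c - ε * (1 + (x - a)) ≤ f x := by
    intro ε hε
    have line_deriv (y : ℝ) : HasDerivAt (fun y ↦ c - ε * (1 + (y - a))) (-ε) y := by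
      simpa using ((((hasDerivAt_id y).sub_const a).const_add 1).const_mul ε).const_sub c
    refine image_le_of_deriv_right_lt_deriv_boundary' (f := fun y ↦ c - ε * (1 + (y - a)))
      (fun y _ ↦ (line_deriv y).continuousAt.continuousWithinAt)
      (fun y _ ↦ (line_deriv y).hasDerivWithinAt) (by linarith) hf hf' ?_ hx
    intro y hy line_eq
    have gap_pos : 0 < ε * (1 + (y - a)) := mul_pos hε (by linarith [hy.1])
    have deriv_nonneg : 0 ≤ f' y := hbelow y hy (by linarith)
    linarith
  have line_tendsto : Tendsto (fun ε : ℝ ↦ c - ε * (1 + (x - a))) (𝓝[>] 0) (𝓝 c) := by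
    have : Continuous fun ε : ℝ ↦ c - ε * (1 + (x - a)) := by fun_prop
    simpa using (this.tendsto 0).mono_left nhdsWithin_le_nhds
  exact le_of_tendsto line_tendsto (eventually_mem_nhdsWithin.mono line_le)

theorem stmt_2_general {α H H' : ℝ → ℝ} (hα : ∀ x < 0, α x ≤ 0)
    (hH : ContinuousOn H (Ici 0))
    (hH' : ∀ t, 0 ≤ t → HasDerivWithinAt H (H' t) (Ici t) t) (h0 : 0 ≤ H 0)
    (hderiv : ∀ t, 0 ≤ t → -α (H t) ≤ H' t) :
    ∀ t, 0 ≤ t → 0 ≤ H t := by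
  intro t ht
  refine le_image_of_deriv_right_nonneg_of_lt (hH.mono Icc_subset_Ici_self)
    (fun s hs ↦ hH' s hs.1) h0 (fun s hs hneg ↦ ?_) (right_mem_Icc.2 ht)
  calc
    0 ≤ -α (H s) := neg_nonneg.2 (hα _ hneg)
    _ ≤ H' s := hderiv s hs.1

theorem stmt_2 (α : ℝ → ℝ) (hαcont : Continuous α) (hαmono : StrictMono α)
    (hα0 : α 0 = 0)
    (H : ℝ → ℝ) (hdiff : Differentiable ℝ H) (h0 : H 0 ≥ 0)
    (hderiv : ∀ t : ℝ, 0 ≤ t → deriv H t ≥ -α (H t)) :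
    ∀ t : ℝ, 0 ≤ t → H t ≥ 0 :=
  stmt_2_general (fun _ hx ↦ (hαmono.monotone hx.le).trans_eq hα0) hdiff.continuous.continuousOn
    (fun t _ ↦ (hdiff t).hasDerivAt.hasDerivWithinAt) h0 hderiv
end

section
/- (Theorem 1, trajectory form.) Let h : ℝⁿ → ℝ be Lipschitz continuous with Lipschitz constant γ ≥ 0, let α : ℝ → ℝ be an extended class K function, and let M : ℝ → ℝ be differentiable. Let x, x̂ : ℝ → ℝⁿ be functions such that the map t ↦ h(x̂(t)) is differentiable, ‖x(t) - x̂(t)‖ ≤ M(t) for all t ≥ 0, and for all t ≥ 0 the derivative of t ↦ h(x̂(t)) is at least -α(h(x̂(t)) - γ·M(t)) + γ·M'(t). If h(x̂(0)) - γ·M(0) ≥ 0, then h(x(t)) ≥ 0 for all t ≥ 0. -/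
/-!
The margin `g t = h (xhat t) - γ * M t` is a lower bound for `h (x t)`, since `h` is `γ`-Lipschitz
and `xhat t` is within `M t` of `x t`. It satisfies `g' ≥ -α g`, and `α` is nonpositive on negative
numbers, so `g' ≥ 0` wherever `g < 0`. Starting from a nonnegative value, `g` cannot become
negative: it would have to cross a line `-ε * (1 + t)` downwards, and there `g' ≥ 0 > -ε`.
-/

open Set
open scoped NNReal

section Comparison

variable {g g' : ℝ → ℝ} {a : ℝ}

theorem const_le_of_deriv_right_nonneg_of_lt {b c : ℝ} (hg : ContinuousOn g (Icc a b))
    (hg' : ∀ t ∈ Ico a b, HasDerivWithinAt g (g' t) (Ici t) t) (ha : c ≤ g a)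
    (hnonneg : ∀ t ∈ Ico a b, g t < c → 0 ≤ g' t) {t : ℝ} (ht : t ∈ Icc a b) : c ≤ g t := by
  have line_le (ε : ℝ) (hε : 0 < ε) : c - ε * (1 + (t - a)) ≤ g t := by
    have line_deriv (s : ℝ) : HasDerivAt (fun s ↦ c - ε * (1 + (s - a))) (-ε) s := by
      simpa using ((((hasDerivAt_id s).sub_const a).const_add 1).const_mul ε).const_sub c
    refine image_le_of_deriv_right_lt_deriv_boundary' (by fun_prop)
      (fun s _ ↦ (line_deriv s).hasDerivWithinAt) (by linarith) hg hg' (fun s hs hcross ↦ ?_) ht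
    have below : g s < c := by
      have : 0 < ε * (1 + (s - a)) := mul_pos hε (by linarith [hs.1])
      linarith
    linarith [hnonneg s hs below]
  have hpos : 0 < 1 + (t - a) := by linarith [ht.1]
  refine le_of_forall_pos_le_add fun δ hδ ↦ ?_
  have := line_le (δ / (1 + (t - a))) (div_pos hδ hpos)
  rw [div_mul_cancel₀ δ hpos.ne'] at this
  linarith

theorem nonneg_of_neg_comp_le_deriv_right {α : ℝ → ℝ} (hα : ∀ y < 0, α y ≤ 0)
    (hg : ContinuousOn g (Ici a))
    (hg' : ∀ t ∈ Ici a, HasDerivWithinAt g (g' t) (Ici t) t) (ha : 0 ≤ g a)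
    (hle : ∀ t ∈ Ici a, -α (g t) ≤ g' t) {t : ℝ} (ht : t ∈ Ici a) : 0 ≤ g t :=
  const_le_of_deriv_right_nonneg_of_lt (hg.mono Icc_subset_Ici_self) (fun s hs ↦ hg' s hs.1) ha
    (fun s hs hneg ↦ (neg_nonneg.2 (hα _ hneg)).trans (hle s hs.1)) (right_mem_Icc.2 ht)

end Comparison

theorem sub_mul_le_of_lipschitzWith_of_dist_le {X : Type*} [PseudoMetricSpace X] {h : X → ℝ}
    {K : ℝ≥0} (hlip : LipschitzWith K h) {x y : X} {r : ℝ} (hr : dist x y ≤ r) :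
    h y - K * r ≤ h x := by
  have hdist : |h x - h y| ≤ K * r := hlip.dist_le_mul_of_le hr
  linarith [neg_abs_le (h x - h y)]

theorem stmt_3_general {X : Type*} [PseudoMetricSpace X] {h : X → ℝ} {γ : ℝ≥0}
    (hlip : LipschitzWith γ h) {α : ℝ → ℝ} (hα : ∀ y < 0, α y ≤ 0) {a : ℝ} {x xhat : ℝ → X}
    {M M' h' : ℝ → ℝ} (hM : ContinuousOn M (Ici a))
    (hM' : ∀ t ∈ Ici a, HasDerivWithinAt M (M' t) (Ici t) t)
    (hh : ContinuousOn (fun t ↦ h (xhat t)) (Ici a))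
    (hh' : ∀ t ∈ Ici a, HasDerivWithinAt (fun s ↦ h (xhat s)) (h' t) (Ici t) t)
    (herr : ∀ t ∈ Ici a, dist (x t) (xhat t) ≤ M t)
    (hcbf : ∀ t ∈ Ici a, -α (h (xhat t) - γ * M t) + γ * M' t ≤ h' t)
    (ha : 0 ≤ h (xhat a) - γ * M a) {t : ℝ} (ht : t ∈ Ici a) : 0 ≤ h (x t) := by
  have margin_nonneg : 0 ≤ h (xhat t) - γ * M t :=
    nonneg_of_neg_comp_le_deriv_right (g := fun s ↦ h (xhat s) - γ * M s) hα
      (hh.sub (continuousOn_const.mul hM))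
      (fun s hs ↦ (hh' s hs).sub ((hM' s hs).const_mul (γ : ℝ))) ha
      (fun s hs ↦ le_sub_iff_add_le.2 (hcbf s hs)) ht
  exact margin_nonneg.trans (sub_mul_le_of_lipschitzWith_of_dist_le hlip (herr t ht))

theorem stmt_3 {n : ℕ} (h : EuclideanSpace ℝ (Fin n) → ℝ) (γ : ℝ) (hγ : 0 ≤ γ)
    (hlip : LipschitzWith γ.toNNReal h)
    (α : ℝ → ℝ) (hαcont : Continuous α) (hαmono : StrictMono α) (hα0 : α 0 = 0)
    (M : ℝ → ℝ) (hM : Differentiable ℝ M)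
    (x xhat : ℝ → EuclideanSpace ℝ (Fin n))
    (hhdiff : Differentiable ℝ (fun t => h (xhat t)))
    (herr : ∀ t : ℝ, 0 ≤ t → ‖x t - xhat t‖ ≤ M t)
    (hcbf : ∀ t : ℝ, 0 ≤ t →
      deriv (fun s => h (xhat s)) t ≥ -α (h (xhat t) - γ * M t) + γ * deriv M t)
    (h0 : h (xhat 0) - γ * M 0 ≥ 0) :
    ∀ t : ℝ, 0 ≤ t → h (x t) ≥ 0 := by
  lift γ to ℝ≥0 using hγ
  rw [Real.toNNReal_coe] at hlip
  exact fun t ht ↦ stmt_3_general hlip (fun y hy ↦ hα0 ▸ (hαmono hy).le)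
    hM.continuous.continuousOn (fun s _ ↦ (hM s).hasDerivAt.hasDerivWithinAt)
    hhdiff.continuous.continuousOn (fun s _ ↦ (hhdiff s).hasDerivAt.hasDerivWithinAt)
    (fun s hs ↦ (dist_eq_norm (x s) (xhat s)).trans_le (herr s hs)) hcbf h0 ht
end

section
/- (Theorem 2, trajectory form.) Let h : ℝⁿ → ℝ be differentiable, let α : ℝ → ℝ be an extended class K function, let κ : ℝ → ℝ be nonincreasing with κ(0) = 1, and let d̄ ≥ 0. Let x : ℝ → ℝⁿ be differentiable, let F : ℝ → ℝⁿ, let G : ℝ → (ℝ^{n_d} →L[ℝ] ℝⁿ) assign a continuous linear map to each time, and let w : ℝ → ℝ^{n_d} satisfy ‖w(t)‖ ≤ d̄ for all t. Suppose that for all t ≥ 0: (i) x'(t) = F(t) + G(t)(w(t)); and (ii) ⟨∇h(x(t)), F(t)⟩ - κ(h(x(t)))·‖(G(t))†(∇h(x(t)))‖·d̄ ≥ -α(h(x(t))), where (G(t))† denotes the adjoint of G(t). If h(x(0)) ≥ 0, then h(x(t)) ≥ 0 for all t ≥ 0. -/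
open scoped RealInnerProductSpace

/-!
Where `h (x t) < 0` one has `κ (h (x t)) ≥ 1`, so the margin in the barrier condition absorbs the
worst admissible disturbance, and `-α (h (x t)) ≥ 0` then makes the derivative of `h ∘ x`
nonnegative. A function `B` with `B 0 ≥ 0` and nonnegative derivative wherever it is negative stays
nonnegative: for `ε > 0` it cannot cross the line `t ↦ -ε * (1 + t)`, since it would touch that line
at a negative value, with a derivative exceeding the slope `-ε`.
-/

open Set ContinuousLinearMap

theorem image_le_of_deriv_right_le_deriv_of_lt {f f' B B' : ℝ → ℝ} {a b : ℝ}
    (hf : ContinuousOn f (Icc a b))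
    (hf' : ∀ t ∈ Ico a b, HasDerivWithinAt f (f' t) (Ici t) t)
    (ha : f a ≤ B a) (hB : ContinuousOn B (Icc a b))
    (hB' : ∀ t ∈ Ico a b, HasDerivWithinAt B (B' t) (Ici t) t)
    (bound : ∀ t ∈ Ico a b, B t < f t → f' t ≤ B' t) ⦃t : ℝ⦄ (ht : t ∈ Icc a b) :
    f t ≤ B t := by
  have le_add_line (ε : ℝ) (hε : 0 < ε) : f t ≤ B t + ε * (1 + (t - a)) := by
    have line_deriv (s : ℝ) : HasDerivAt (fun r ↦ ε * (1 + (r - a))) ε s := by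
      simpa using (((hasDerivAt_id s).sub_const a).const_add 1).const_mul ε
    refine image_le_of_deriv_right_lt_deriv_boundary' (B := fun s ↦ B s + ε * (1 + (s - a)))
      (B' := fun s ↦ B' s + ε) hf hf' ?_ (by fun_prop)
      (fun s hs ↦ (hB' s hs).add (line_deriv s).hasDerivWithinAt) ?_ ht
    · simpa using ha.trans (le_add_of_nonneg_right hε.le)
    · intro s hs touch
      have line_pos : 0 < ε * (1 + (s - a)) := mul_pos hε (by linarith [hs.1])
      exact (bound s hs (by linarith)).trans_lt (lt_add_of_pos_right _ hε)
  have scale_pos : 0 < 1 + (t - a) := by linarith [ht.1]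
  refine le_of_forall_pos_le_add fun δ hδ ↦ ?_
  simpa [div_mul_cancel₀ _ scale_pos.ne'] using le_add_line _ (div_pos hδ scale_pos)

section Hilbert

variable {E : Type*} [NormedAddCommGroup E] [InnerProductSpace ℝ E] [CompleteSpace E]

theorem hasDerivWithinAt_comp_of_hasGradientAt {h : E → ℝ} {x : ℝ → E} {g v : E} {s : Set ℝ}
    {t : ℝ} (hh : HasGradientAt h g (x t)) (hx : HasDerivWithinAt x v s t) :
    HasDerivWithinAt (h ∘ x) ⟪g, v⟫ s t :=
  hh.hasFDerivAt.comp_hasDerivWithinAt t hx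

variable {W : Type*} [NormedAddCommGroup W] [InnerProductSpace ℝ W] [CompleteSpace W]

theorem neg_norm_adjoint_mul_le_inner (A : W →L[ℝ] E) (v : E) {w : W} {d : ℝ} (hw : ‖w‖ ≤ d) :
    -(‖adjoint A v‖ * d) ≤ ⟪v, A w⟫ := by
  rw [← adjoint_inner_left]
  calc -(‖adjoint A v‖ * d) ≤ -(‖adjoint A v‖ * ‖w‖) := by gcongr
    _ ≤ ⟪adjoint A v, w⟫ := neg_le_of_abs_le (abs_real_inner_le_norm _ _)

theorem inner_sub_mul_norm_adjoint_le_inner_add (A : W →L[ℝ] E) (u v : E) {w : W} {k d : ℝ}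
    (hk : 1 ≤ k) (hw : ‖w‖ ≤ d) :
    ⟪v, u⟫ - k * ‖adjoint A v‖ * d ≤ ⟪v, u + A w⟫ := by
  have d_nonneg : 0 ≤ d := (norm_nonneg w).trans hw
  calc ⟪v, u⟫ - k * ‖adjoint A v‖ * d ≤ ⟪v, u⟫ - 1 * ‖adjoint A v‖ * d := by gcongr
    _ = ⟪v, u⟫ + -(‖adjoint A v‖ * d) := by ring
    _ ≤ ⟪v, u⟫ + ⟪v, A w⟫ := by gcongr; exact neg_norm_adjoint_mul_le_inner A v hw
    _ = ⟪v, u + A w⟫ := (inner_add_right v u (A w)).symm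

theorem stmt_6_general {h : E → ℝ} {α κ : ℝ → ℝ} {d : ℝ} {x F : ℝ → E} {G : ℝ → W →L[ℝ] E}
    {w : ℝ → W} (hα : ∀ r < 0, α r ≤ 0) (hκ : ∀ r < 0, 1 ≤ κ r)
    (hh : ∀ t, 0 ≤ t → DifferentiableAt ℝ h (x t)) (hx : ContinuousOn x (Ici 0))
    (hw : ∀ t, 0 ≤ t → ‖w t‖ ≤ d)
    (hdyn : ∀ t, 0 ≤ t → HasDerivWithinAt x (F t + G t (w t)) (Ici t) t)
    (hcbf : ∀ t, 0 ≤ t → h (x t) < 0 →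
      -α (h (x t)) ≤
        ⟪gradient h (x t), F t⟫ - κ (h (x t)) * ‖adjoint (G t) (gradient h (x t))‖ * d)
    (h0 : 0 ≤ h (x 0)) {t : ℝ} (ht : 0 ≤ t) : 0 ≤ h (x t) := by
  have barrier_cont : ContinuousOn (h ∘ x) (Icc 0 t) := fun s hs ↦
    (hh s hs.1).continuousAt.comp_continuousWithinAt ((hx s hs.1).mono Icc_subset_Ici_self)
  have barrier_deriv : ∀ s ∈ Ico 0 t,
      HasDerivWithinAt (h ∘ x) ⟪gradient h (x s), F s + G s (w s)⟫ (Ici s) s := fun s hs ↦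
    hasDerivWithinAt_comp_of_hasGradientAt (hh s hs.1).hasGradientAt (hdyn s hs.1)
  have deriv_nonneg : ∀ s ∈ Ico 0 t, h (x s) < 0 →
      0 ≤ ⟪gradient h (x s), F s + G s (w s)⟫ := fun s hs hneg ↦
    calc 0 ≤ -α (h (x s)) := neg_nonneg.mpr (hα _ hneg)
      _ ≤ ⟪gradient h (x s), F s⟫ - κ (h (x s)) * ‖adjoint (G s) (gradient h (x s))‖ * d :=
        hcbf s hs.1 hneg
      _ ≤ ⟪gradient h (x s), F s + G s (w s)⟫ :=
        inner_sub_mul_norm_adjoint_le_inner_add _ _ _ (hκ _ hneg) (hw s hs.1)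
  exact image_le_of_deriv_right_le_deriv_of_lt (f := 0) (f' := 0) continuousOn_const
    (fun s _ ↦ hasDerivWithinAt_const s _ 0) h0 barrier_cont barrier_deriv deriv_nonneg ⟨ht, le_rfl⟩

end Hilbert

theorem stmt_6 {n nd : ℕ} (h : EuclideanSpace ℝ (Fin n) → ℝ)
    (hdiff : Differentiable ℝ h)
    (α : ℝ → ℝ) (hαcont : Continuous α) (hαmono : StrictMono α) (hα0 : α 0 = 0)
    (κ : ℝ → ℝ) (hκ : Antitone κ) (hκ0 : κ 0 = 1)
    (dbar : ℝ) (hdbar : 0 ≤ dbar)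
    (x : ℝ → EuclideanSpace ℝ (Fin n)) (hx : Differentiable ℝ x)
    (F : ℝ → EuclideanSpace ℝ (Fin n))
    (G : ℝ → (EuclideanSpace ℝ (Fin nd) →L[ℝ] EuclideanSpace ℝ (Fin n)))
    (w : ℝ → EuclideanSpace ℝ (Fin nd)) (hw : ∀ t : ℝ, ‖w t‖ ≤ dbar)
    (hdyn : ∀ t : ℝ, 0 ≤ t → deriv x t = F t + (G t) (w t))
    (hcbf : ∀ t : ℝ, 0 ≤ t →
      ⟪gradient h (x t), F t⟫
        - κ (h (x t)) * ‖(ContinuousLinearMap.adjoint (G t)) (gradient h (x t))‖ * dbar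
        ≥ -α (h (x t)))
    (h0 : h (x 0) ≥ 0) :
    ∀ t : ℝ, 0 ≤ t → h (x t) ≥ 0 := fun _ ↦
  stmt_6_general (fun _ hr ↦ hα0 ▸ (hαmono hr).le) (fun _ hr ↦ hκ0 ▸ hκ hr.le)
    (fun t _ ↦ hdiff (x t)) hx.continuous.continuousOn (fun t _ ↦ hw t)
    (fun t ht ↦ hdyn t ht ▸ (hx t).hasDerivAt.hasDerivWithinAt) (fun t ht _ ↦ hcbf t ht) h0
end

section
/- Let m be a natural number, a ∈ ℝ, and b⁻, b⁺ : Fin m → ℝ. Suppose there exists an index i such that b⁻ᵢ·b⁺ᵢ > 0 (i.e., b⁻ᵢ and b⁺ᵢ are both nonzero and have the same sign). Then the set K = { u ∈ ℝᵐ : a + ∑ⱼ min(b⁻ⱼ·uⱼ, b⁺ⱼ·uⱼ) ≥ 0 } is nonempty. -/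
open Filter in
theorem exists_le_mul_and_le_mul_of_mul_pos {K : Type*} [Field K] [LinearOrder K]
    [IsStrictOrderedRing K] {x y : K} (hxy : 0 < x * y) (c : K) :
    ∃ t, c ≤ x * t ∧ c ≤ y * t := by
  rcases pos_and_pos_or_neg_and_neg_of_mul_pos hxy with ⟨hx, hy⟩ | ⟨hx, hy⟩
  · have hx_large : ∀ᶠ t in atTop, c ≤ x * t :=
      (tendsto_id.const_mul_atTop hx).eventually_ge_atTop c
    have hy_large : ∀ᶠ t in atTop, c ≤ y * t :=
      (tendsto_id.const_mul_atTop hy).eventually_ge_atTop c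
    exact (hx_large.and hy_large).exists
  · have hx_large : ∀ᶠ t in atBot, c ≤ x * t :=
      (tendsto_id.const_mul_atBot_of_neg hx).eventually_ge_atTop c
    have hy_large : ∀ᶠ t in atBot, c ≤ y * t :=
      (tendsto_id.const_mul_atBot_of_neg hy).eventually_ge_atTop c
    exact (hx_large.and hy_large).exists

theorem sum_apply_piSingle {ι N : Type*} {M : ι → Type*} [Fintype ι] [DecidableEq ι]
    [∀ i, Zero (M i)] [AddCommMonoid N] (f : ∀ i, M i → N) (hf : ∀ i, f i 0 = 0)
    (i : ι) (x : M i) : ∑ j, f j (Pi.single i x j) = f i x := by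
  rw [Fintype.sum_eq_single i fun j hj ↦ by rw [Pi.single_eq_of_ne hj, hf], Pi.single_eq_same]

theorem stmt_9_general {ι K : Type*} [Fintype ι] [Field K] [LinearOrder K] [IsStrictOrderedRing K]
    (a : K) (bm bp : ι → K) (hsign : ∃ i, 0 < bm i * bp i) :
    ∃ u : ι → K, 0 ≤ a + ∑ j, min (bm j * u j) (bp j * u j) := by
  classical
  obtain ⟨i, hi⟩ := hsign
  obtain ⟨t, hbm, hbp⟩ := exists_le_mul_and_le_mul_of_mul_pos hi (-a)
  have hsum : ∑ j, min (bm j * Pi.single (M := fun _ ↦ K) i t j)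
      (bp j * Pi.single (M := fun _ ↦ K) i t j) = min (bm i * t) (bp i * t) :=
    sum_apply_piSingle (fun j x ↦ min (bm j * x) (bp j * x)) (by simp) i t
  refine ⟨Pi.single i t, ?_⟩
  rw [hsum]
  exact neg_le_iff_add_nonneg'.mp (le_min hbm hbp)

theorem stmt_9 (m : ℕ) (a : ℝ) (bm bp : Fin m → ℝ)
    (hsign : ∃ i : Fin m, bm i * bp i > 0) :
    Set.Nonempty {u : EuclideanSpace ℝ (Fin m) | a + ∑ j, min (bm j * u j) (bp j * u j) ≥ 0} := by
  obtain ⟨u, hu⟩ := stmt_9_general a bm bp hsign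
  exact ⟨WithLp.toLp 2 u, hu⟩
end

section
/- Let P, A ∈ ℝⁿˣⁿ and C ∈ ℝᵖˣⁿ with P symmetric positive definite, let θ > 0, and suppose P·A + Aᵀ·P - Cᵀ·C = -2θ·P. Set L = (1/2)·P⁻¹·Cᵀ. Let e : ℝ → ℝⁿ be differentiable with e'(t) = (A - L·C)·e(t) for all t. Then for all t ≥ 0, ‖e(t)‖ ≤ √(λ_max(P)/λ_min(P)) · ‖e(0)‖ · exp(-θ·t), where λ_max(P) and λ_min(P) denote the largest and smallest eigenvalues of P. -/
open Matrix

/-!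
With the gain `L = (1/2) P⁻¹ Cᴴ` both `P L C` and its adjoint equal `(1/2) Cᴴ C`, so the hypothesis
on `A` becomes the Lyapunov equation `P M + Mᴴ P = -2θ P` for the closed-loop matrix `M = A - L C`.
Along `e' = M e` the quadratic form `V = ⟨e, P e⟩` then satisfies `V' = -2θ V` exactly, so it is an
exponential, and comparing `V` with `‖e‖ ^ 2` through the extreme eigenvalues of `P` costs the
factor `√(λ_max / λ_min)`.
-/

theorem eq_exp_smul_of_hasDerivWithinAt {E : Type*} [NormedAddCommGroup E] [NormedSpace ℝ E]
    {s : Set ℝ} (hs : Convex ℝ s) {c : ℝ} {f : ℝ → E}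
    (hf : ∀ t ∈ s, HasDerivWithinAt f (c • f t) s t) {t₀ t : ℝ} (ht₀ : t₀ ∈ s) (ht : t ∈ s) :
    f t = Real.exp (c * (t - t₀)) • f t₀ := by
  have hderiv : ∀ u ∈ s, HasDerivWithinAt (fun v => Real.exp (-c * (v - t₀)) • f v) 0 s u := by
    intro u hu
    have hexp : HasDerivAt (fun v => Real.exp (-c * (v - t₀)))
        (Real.exp (-c * (u - t₀)) * (-c * 1)) u :=
      (((hasDerivAt_id u).sub_const t₀).const_mul (-c)).exp
    refine (hexp.hasDerivWithinAt.smul (hf u hu)).congr_deriv ?_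
    module
  have hconst : Real.exp (-c * (t - t₀)) • f t = f t₀ := by
    have hle := hs.norm_image_sub_le_of_norm_hasDerivWithin_le hderiv (C := 0) (by simp) ht₀ ht
    rw [zero_mul, norm_le_zero_iff, sub_eq_zero] at hle
    simpa using hle
  rw [← hconst, smul_smul, ← Real.exp_add]
  simp

section Lyapunov

open scoped ComplexOrder

variable {𝕜 ι κ : Type*} [RCLike 𝕜] [Fintype ι] [DecidableEq ι] [Fintype κ]

/-- The quadratic form `x ↦ ⟨x, P x⟩` used as a Lyapunov function. The real part makes it
real-valued for every matrix `P`; it changes nothing when `P` is Hermitian. -/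
noncomputable def lyapunovForm (P : Matrix ι ι 𝕜) (x : EuclideanSpace 𝕜 ι) : ℝ :=
  RCLike.re (inner 𝕜 x (toEuclideanLin P x))

theorem lyapunovForm_smul (c : ℝ) (P : Matrix ι ι 𝕜) (x : EuclideanSpace 𝕜 ι) :
    lyapunovForm (c • P) x = c * lyapunovForm P x := by
  have hsmul : c • P = (c : 𝕜) • P := RCLike.real_smul_eq_coe_smul c P
  rw [lyapunovForm, hsmul, map_smul, LinearMap.smul_apply, inner_smul_right, RCLike.re_ofReal_mul,
    lyapunovForm]

theorem lyapunovForm_mul_add_conjTranspose_mul (P M : Matrix ι ι 𝕜) (x : EuclideanSpace 𝕜 ι) :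
    lyapunovForm (P * M + Mᴴ * P) x =
      RCLike.re (inner 𝕜 x (toEuclideanLin P (toEuclideanLin M x)) +
        inner 𝕜 (toEuclideanLin M x) (toEuclideanLin P x)) := by
  rw [lyapunovForm, map_add, LinearMap.add_apply, inner_add_right, toLpLin_mul_same,
    toLpLin_mul_same, LinearMap.comp_apply, LinearMap.comp_apply,
    toEuclideanLin_conjTranspose_eq_adjoint, LinearMap.adjoint_inner_right]

theorem hasDerivWithinAt_lyapunovForm (P : Matrix ι ι 𝕜) {M : Matrix ι ι 𝕜} {s : Set ℝ} {t : ℝ}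
    {e : ℝ → EuclideanSpace 𝕜 ι} (he : HasDerivWithinAt e (toEuclideanLin M (e t)) s t) :
    HasDerivWithinAt (fun u => lyapunovForm P (e u)) (lyapunovForm (P * M + Mᴴ * P) (e t)) s t := by
  have hPe : HasDerivWithinAt (fun u => toEuclideanLin P (e u))
      (toEuclideanLin P (toEuclideanLin M (e t))) s t :=
    ((toEuclideanLin P).restrictScalars ℝ).toContinuousLinearMap.hasFDerivAt.comp_hasDerivWithinAt
      t he
  rw [lyapunovForm_mul_add_conjTranspose_mul]
  exact RCLike.reCLM.hasFDerivAt.comp_hasDerivWithinAt t (he.inner 𝕜 hPe)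

theorem lyapunovForm_eq_exp_mul_of_lyapunov_eq {P M : Matrix ι ι 𝕜} {c : ℝ}
    (hlyap : P * M + Mᴴ * P = c • P) {s : Set ℝ} (hs : Convex ℝ s) {e : ℝ → EuclideanSpace 𝕜 ι}
    (he : ∀ t ∈ s, HasDerivWithinAt e (toEuclideanLin M (e t)) s t) {t₀ t : ℝ} (ht₀ : t₀ ∈ s)
    (ht : t ∈ s) :
    lyapunovForm P (e t) = Real.exp (c * (t - t₀)) * lyapunovForm P (e t₀) := by
  refine eq_exp_smul_of_hasDerivWithinAt (f := fun u => lyapunovForm P (e u)) hs ?_ ht₀ ht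
  intro u hu
  rw [smul_eq_mul, ← lyapunovForm_smul, ← hlyap]
  exact hasDerivWithinAt_lyapunovForm P (he u hu)

theorem lyapunovForm_eq_sum_eigenvalues {P : Matrix ι ι 𝕜} (hP : P.IsHermitian)
    (x : EuclideanSpace 𝕜 ι) :
    lyapunovForm P x = ∑ i, hP.eigenvalues i * ‖inner 𝕜 (hP.eigenvectorBasis i) x‖ ^ 2 := by
  have hsymm := isSymmetric_toEuclideanLin_iff.2 hP
  have heigen (i : ι) : toEuclideanLin P (hP.eigenvectorBasis i) =
      (hP.eigenvalues i : 𝕜) • hP.eigenvectorBasis i := by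
    rw [← RCLike.real_smul_eq_coe_smul, toLpLin_apply, hP.mulVec_eigenvectorBasis,
      WithLp.toLp_smul, WithLp.toLp_ofLp]
  rw [lyapunovForm, ← hP.eigenvectorBasis.sum_inner_mul_inner, map_sum]
  refine Finset.sum_congr rfl fun i _ => ?_
  rw [← hsymm, heigen, inner_smul_left, RCLike.conj_ofReal, mul_left_comm, RCLike.re_ofReal_mul,
    inner_mul_symm_re_eq_norm, norm_mul, norm_inner_symm, sq]

theorem iInf_eigenvalues_mul_norm_sq_le_lyapunovForm {P : Matrix ι ι 𝕜} (hP : P.IsHermitian)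
    (x : EuclideanSpace 𝕜 ι) : (⨅ i, hP.eigenvalues i) * ‖x‖ ^ 2 ≤ lyapunovForm P x := by
  rw [lyapunovForm_eq_sum_eigenvalues hP, ← hP.eigenvectorBasis.sum_sq_norm_inner_right x,
    Finset.mul_sum]
  gcongr with i
  exact ciInf_le (Set.finite_range _).bddBelow i

theorem lyapunovForm_le_iSup_eigenvalues_mul_norm_sq {P : Matrix ι ι 𝕜} (hP : P.IsHermitian)
    (x : EuclideanSpace 𝕜 ι) : lyapunovForm P x ≤ (⨆ i, hP.eigenvalues i) * ‖x‖ ^ 2 := by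
  rw [lyapunovForm_eq_sum_eigenvalues hP, ← hP.eigenvectorBasis.sum_sq_norm_inner_right x,
    Finset.mul_sum]
  gcongr with i
  exact le_ciSup (Set.finite_range _).bddAbove i

theorem iInf_eigenvalues_pos_of_posDef [Nonempty ι] {P : Matrix ι ι 𝕜} (hP : P.PosDef) :
    0 < ⨅ i, hP.isHermitian.eigenvalues i := by
  obtain ⟨i, hi⟩ := exists_eq_ciInf_of_finite (f := hP.isHermitian.eigenvalues)
  exact hi ▸ hP.eigenvalues_pos i

theorem norm_le_of_lyapunovForm_le {P : Matrix ι ι 𝕜} (hP : P.PosDef) {x y : EuclideanSpace 𝕜 ι}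
    {r : ℝ} (hr : 0 ≤ r) (hxy : lyapunovForm P y ≤ r ^ 2 * lyapunovForm P x) :
    ‖y‖ ≤ √((⨆ i, hP.isHermitian.eigenvalues i) / (⨅ i, hP.isHermitian.eigenvalues i)) *
      ‖x‖ * r := by
  cases isEmpty_or_nonempty ι with
  | inl _ => rw [Subsingleton.elim y 0, norm_zero]; positivity
  | inr _ =>
    set lmax := ⨆ i, hP.isHermitian.eigenvalues i
    set lmin := ⨅ i, hP.isHermitian.eigenvalues i
    have hlmin : 0 < lmin := iInf_eigenvalues_pos_of_posDef hP
    have hsq : lmin * ‖y‖ ^ 2 ≤ lmax * (‖x‖ * r) ^ 2 := calc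
      lmin * ‖y‖ ^ 2 ≤ lyapunovForm P y :=
        iInf_eigenvalues_mul_norm_sq_le_lyapunovForm hP.isHermitian y
      _ ≤ r ^ 2 * lyapunovForm P x := hxy
      _ ≤ r ^ 2 * (lmax * ‖x‖ ^ 2) := by
        gcongr
        exact lyapunovForm_le_iSup_eigenvalues_mul_norm_sq hP.isHermitian x
      _ = lmax * (‖x‖ * r) ^ 2 := by ring
    calc ‖y‖ ≤ √(lmax / lmin * (‖x‖ * r) ^ 2) := by
          refine Real.le_sqrt_of_sq_le ?_
          rwa [div_mul_eq_mul_div, le_div_iff₀' hlmin]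
      _ = √(lmax / lmin) * ‖x‖ * r := by
          rw [Real.sqrt_mul' _ (sq_nonneg _), Real.sqrt_sq (by positivity), mul_assoc]

theorem norm_le_of_lyapunov_eq {P M : Matrix ι ι 𝕜} (hP : P.PosDef) {θ : ℝ}
    (hlyap : P * M + Mᴴ * P = (-2 * θ) • P) {s : Set ℝ} (hs : Convex ℝ s)
    {e : ℝ → EuclideanSpace 𝕜 ι}
    (he : ∀ t ∈ s, HasDerivWithinAt e (toEuclideanLin M (e t)) s t)
    {t₀ t : ℝ} (ht₀ : t₀ ∈ s) (ht : t ∈ s) :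
    ‖e t‖ ≤ √((⨆ i, hP.isHermitian.eigenvalues i) / (⨅ i, hP.isHermitian.eigenvalues i)) *
      ‖e t₀‖ * Real.exp (-θ * (t - t₀)) := by
  refine norm_le_of_lyapunovForm_le hP (Real.exp_nonneg _) (le_of_eq ?_)
  rw [lyapunovForm_eq_exp_mul_of_lyapunov_eq hlyap hs he ht₀ ht, ← Real.exp_nat_mul]
  ring_nf

/-- The gain `L = (1/2) P⁻¹ Cᴴ` of the Luenberger observer with output matrix `C`, where `P` is the
matrix of the Lyapunov function. Since `⁻¹` is the matrix inverse with junk value `0`, the formula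
has its meaning only for invertible `P`. -/
noncomputable def luenbergerGain (P : Matrix ι ι 𝕜) (C : Matrix κ ι 𝕜) : Matrix ι κ 𝕜 :=
  (1 / 2 : ℝ) • (P⁻¹ * Cᴴ)

theorem mul_luenbergerGain_mul {P : Matrix ι ι 𝕜} (hP : IsUnit P) (C : Matrix κ ι 𝕜) :
    P * (luenbergerGain P C * C) = (1 / 2 : ℝ) • (Cᴴ * C) := by
  rw [luenbergerGain, Matrix.smul_mul, Matrix.mul_smul, Matrix.mul_assoc,
    mul_nonsing_inv_cancel_left _ _ ((isUnit_iff_isUnit_det P).1 hP)]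

theorem mul_sub_luenbergerGain_mul_add_conjTranspose_mul {P : Matrix ι ι 𝕜}
    (hP : P.IsHermitian) (hunit : IsUnit P) (A : Matrix ι ι 𝕜) (C : Matrix κ ι 𝕜) :
    P * (A - luenbergerGain P C * C) + (A - luenbergerGain P C * C)ᴴ * P =
      P * A + Aᴴ * P - Cᴴ * C := by
  have hright := mul_luenbergerGain_mul hunit C
  have hleft : (luenbergerGain P C * C)ᴴ * P = (1 / 2 : ℝ) • (Cᴴ * C) := by
    rw [← hP.eq, ← conjTranspose_mul, hP.eq, hright, conjTranspose_smul, conjTranspose_mul,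
      conjTranspose_conjTranspose, star_trivial]
  rw [Matrix.mul_sub, conjTranspose_sub, Matrix.sub_mul, hright, hleft]
  module

theorem stmt_13_general {P A : Matrix ι ι 𝕜} {C : Matrix κ ι 𝕜} (hP : P.PosDef) {θ : ℝ}
    (hlyap : P * A + Aᴴ * P - Cᴴ * C = (-2 * θ) • P) {s : Set ℝ} (hs : Convex ℝ s)
    {e : ℝ → EuclideanSpace 𝕜 ι}
    (he : ∀ t ∈ s, HasDerivWithinAt e (toEuclideanLin (A - luenbergerGain P C * C) (e t)) s t)
    {t₀ t : ℝ} (ht₀ : t₀ ∈ s) (ht : t ∈ s) :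
    ‖e t‖ ≤ √((⨆ i, hP.isHermitian.eigenvalues i) / (⨅ i, hP.isHermitian.eigenvalues i)) *
      ‖e t₀‖ * Real.exp (-θ * (t - t₀)) :=
  have hclosedLoop := mul_sub_luenbergerGain_mul_add_conjTranspose_mul hP.isHermitian hP.isUnit A C
  norm_le_of_lyapunov_eq hP (hclosedLoop.trans hlyap) hs he ht₀ ht

end Lyapunov

theorem stmt_13 {n p : ℕ} (P A : Matrix (Fin n) (Fin n) ℝ) (C : Matrix (Fin p) (Fin n) ℝ)
    (hP : P.PosDef)
    (θ : ℝ) (hθ : 0 < θ)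
    (hlyap : P * A + Aᵀ * P - Cᵀ * C = (-2 * θ) • P)
    (L : Matrix (Fin n) (Fin p) ℝ) (hL : L = (1/2 : ℝ) • (P⁻¹ * Cᵀ))
    (e : ℝ → EuclideanSpace ℝ (Fin n)) (hediff : Differentiable ℝ e)
    (hdyn : ∀ t : ℝ, deriv e t = Matrix.toEuclideanLin (A - L * C) (e t)) :
    ∀ t : ℝ, 0 ≤ t →
      ‖e t‖ ≤ Real.sqrt ((⨆ i, hP.isHermitian.eigenvalues i) / (⨅ i, hP.isHermitian.eigenvalues i))
        * ‖e 0‖ * Real.exp (-θ * t) := by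
  intro t _
  have hgain : L = luenbergerGain P C := by
    rw [hL, luenbergerGain, conjTranspose_eq_transpose_of_trivial]
  have he : ∀ u ∈ Set.univ,
      HasDerivWithinAt e (toEuclideanLin (A - luenbergerGain P C * C) (e u)) Set.univ u :=
    fun u _ => hgain ▸ hdyn u ▸ (hediff u).hasDerivAt.hasDerivWithinAt
  simp only [← conjTranspose_eq_transpose_of_trivial] at hlyap
  simpa only [sub_zero] using
    stmt_13_general hP hlyap convex_univ he (Set.mem_univ 0) (Set.mem_univ t)
end
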